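/- Let δ ≥ 1 and H = 2^{δ−1}. Let w be a factor of v_δ such that π(w) contains at least H letters a and at least H letters b. If w is a bispecial factor of v_δ, then π(w) is a bispecial factor of the Fibonacci word f. -/

import Mathlib

/-!
Every letter of `vdelta δ` is determined by the underlying Fibonacci letter `c` together with the
number of earlier occurrences of `c`, taken modulo `H = 2 ^ (δ - 1)`, since `yseq δ` has period
`H`. Conversely a long factor `w` determines these numbers: `yseq δ k = 1` exactly when `H ∣ k`
(`yseq_eq_one_iff`), so if `w` contains at least `H` letters lying over `c`, then the place of the
value `1` among them reveals the number of `c`'s before `w` modulo `H`, whatever the occurrence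
of `w` (`countLetter_modEq`).

Hence two extensions of `w` by one letter, on the right or on the left, whose projections agree
must be equal. Distinct extensions of `w` therefore have distinct projections, and these are
extensions of the projection of `w` in the Fibonacci word.
-/

open Filter

/-- The golden mean τ = (1+√5)/2. -/
noncomputable def tau : ℝ := (1 + Real.sqrt 5) / 2

/-- The Fibonacci morphism φ on the alphabet {a, b}; we encode a = `false`, b = `true`,
so φ(a) = ab and φ(b) = a. -/
def phi : Bool → List Bool
  | false => [false, true]
  | true  => [false]

/-- Application of the morphism φ to a finite word. -/
def phiW (w : List Bool) : List Bool := w.flatMap phi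

/-- φⁿ(a). -/
def phiIter (n : ℕ) : List Bool := phiW^[n] [false]

/-- The Fibonacci word, i.e. the fixed point of φ beginning with a (= `false`):
the unique sequence having φⁿ(a) as a prefix for every n. -/
def fibWord (i : ℕ) : Bool := (phiIter (i + 1)).getD i false

/-- The factor of the sequence `u` of length `n` occurring at index `i`. -/
def factorAt {α : Type*} (u : ℕ → α) (i n : ℕ) : List α :=
  (List.range n).map fun k => u (i + k)

/-- The finite word `w` occurs in the sequence `u` at index `i`. -/
def OccursAt {α : Type*} (u : ℕ → α) (w : List α) (i : ℕ) : Prop :=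
  factorAt u i w.length = w

/-- `w` is a factor of the sequence `u`. -/
def IsFactor {α : Type*} (u : ℕ → α) (w : List α) : Prop :=
  ∃ i, OccursAt u w i

/-- The factor `w` of `u` is bispecial: it can be extended to the right by two distinct
letters and to the left by two distinct letters. -/
def IsBispecial {α : Type*} (u : ℕ → α) (w : List α) : Prop :=
  IsFactor u w ∧
  (∃ x y : α, x ≠ y ∧ IsFactor u (w ++ [x]) ∧ IsFactor u (w ++ [y])) ∧
  (∃ z t : α, z ≠ t ∧ IsFactor u (z :: w) ∧ IsFactor u (t :: w))

/-- The constant gap sequence y_δ over {1,…,δ}: y_δ(i) = 1 if 2^(δ-1) ∣ i,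
and y_δ(i) = δ - ν₂(i) otherwise (ν₂ = 2-adic valuation). -/
def yseq (δ : ℕ) (i : ℕ) : ℕ :=
  if 2 ^ (δ - 1) ∣ i then 1 else δ - padicValNat 2 i

/-- Number of occurrences of the letter `c` among `u 0, …, u (i-1)`. -/
def countLetter (u : ℕ → Bool) (c : Bool) (i : ℕ) : ℕ :=
  (List.range i).countP fun k => u k == c

/-- The colouring v_δ of the Fibonacci word by y_δ and its hatted copy ŷ_δ:
`Sum.inl k` encodes the letter k ∈ {1,…,δ} and `Sum.inr k` the hatted letter k̂. -/
def vdelta (δ : ℕ) (i : ℕ) : ℕ ⊕ ℕ :=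
  if fibWord i = false then Sum.inl (yseq δ (countLetter fibWord false i))
  else Sum.inr (yseq δ (countLetter fibWord true i))

/-- The discolouration map π sending each unhatted letter to a (= `false`) and each
hatted letter to b (= `true`); thus π(v_δ) = f letterwise. -/
def piMap : ℕ ⊕ ℕ → Bool := Sum.elim (fun _ => false) (fun _ => true)

/-! ### The constant gap sequence -/

lemma yseq_eq_one_iff {δ : ℕ} (hδ : 1 ≤ δ) (k : ℕ) : yseq δ k = 1 ↔ 2 ^ (δ - 1) ∣ k := by
  unfold yseq
  split_ifs with h
  · simp [h]
  · simp only [h, iff_false]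
    intro h1
    apply h
    have h2 : δ - 1 = padicValNat 2 k := by omega
    rw [h2]
    exact pow_padicValNat_dvd

lemma yseq_add_mul (δ k t : ℕ) : yseq δ (k + 2 ^ (δ - 1) * t) = yseq δ k := by
  unfold yseq
  have hd : 2 ^ (δ - 1) ∣ k + 2 ^ (δ - 1) * t ↔ 2 ^ (δ - 1) ∣ k :=
    (Nat.dvd_add_iff_left (Dvd.intro _ rfl)).symm
  by_cases h : 2 ^ (δ - 1) ∣ k
  · rw [if_pos h, if_pos (hd.2 h)]
  · have h' : ¬ 2 ^ (δ - 1) ∣ k + 2 ^ (δ - 1) * t := fun h1 => h (hd.1 h1)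
    rw [if_neg h, if_neg h']
    have hk : k ≠ 0 := by rintro rfl; simp at h
    have hk' : k + 2 ^ (δ - 1) * t ≠ 0 := by omega
    -- Both numbers are divisible by the same powers of two below `2 ^ (δ - 1)`,
    -- and both valuations are smaller than `δ - 1`.
    have key : ∀ n, 2 ^ n ∣ k + 2 ^ (δ - 1) * t ↔ 2 ^ n ∣ k := by
      intro n
      rcases le_total n (δ - 1) with hn | hn
      · exact (Nat.dvd_add_iff_left ((pow_dvd_pow 2 hn).mul_right t)).symm
      · exact ⟨fun h1 => absurd ((pow_dvd_pow 2 hn).trans h1) h',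
          fun h1 => absurd ((pow_dvd_pow 2 hn).trans h1) h⟩
    have hle : padicValNat 2 (k + 2 ^ (δ - 1) * t) = padicValNat 2 k := by
      apply le_antisymm
      · exact (padicValNat_dvd_iff_le hk).1 ((key _).1 pow_padicValNat_dvd)
      · exact (padicValNat_dvd_iff_le hk').1 ((key _).2 pow_padicValNat_dvd)
    rw [hle]

lemma yseq_congr {δ k l : ℕ} (h : k ≡ l [MOD 2 ^ (δ - 1)]) : yseq δ k = yseq δ l := by
  wlog hkl : k ≤ l generalizing k l
  · exact (this h.symm (le_of_not_ge hkl)).symm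
  obtain ⟨t, ht⟩ := (Nat.modEq_iff_dvd' hkl).1 h
  have : l = k + 2 ^ (δ - 1) * t := by omega
  rw [this, yseq_add_mul]

/-! ### Occurrences and letter counts -/

lemma factorAt_succ {α : Type*} (u : ℕ → α) (i n : ℕ) :
    factorAt u i (n + 1) = factorAt u i n ++ [u (i + n)] := by
  simp [factorAt, List.range_succ]

lemma factorAt_succ' {α : Type*} (u : ℕ → α) (i n : ℕ) :
    factorAt u i (n + 1) = u i :: factorAt u (i + 1) n := by
  simp [factorAt, List.range_succ_eq_map, Function.comp_def, Nat.add_assoc, Nat.add_comm 1]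

lemma occursAt_append_singleton {α : Type*} {u : ℕ → α} {w : List α} {x : α} {i : ℕ} :
    OccursAt u (w ++ [x]) i ↔ OccursAt u w i ∧ u (i + w.length) = x := by
  unfold OccursAt
  rw [List.length_append, List.length_singleton, factorAt_succ,
    ← List.concat_eq_append, ← List.concat_eq_append, List.concat_inj]

lemma occursAt_cons {α : Type*} {u : ℕ → α} {w : List α} {x : α} {i : ℕ} :
    OccursAt u (x :: w) i ↔ u i = x ∧ OccursAt u w (i + 1) := by
  unfold OccursAt
  rw [List.length_cons, factorAt_succ', List.cons.injEq]

lemma OccursAt.eq {α : Type*} {u : ℕ → α} {w : List α} {i j k : ℕ} (hi : OccursAt u w i)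
    (hj : OccursAt u w j) (hk : k < w.length) : u (i + k) = u (j + k) := by
  have h : factorAt u i w.length = factorAt u j w.length := hi.trans hj.symm
  have := List.map_inj_left.1 h k (List.mem_range.2 hk)
  exact this

lemma countLetter_succ (u : ℕ → Bool) (c : Bool) (i : ℕ) :
    countLetter u c (i + 1) = countLetter u c i + if u i = c then 1 else 0 := by
  simp [countLetter, List.range_succ, List.countP_append, List.countP_singleton]

lemma countLetter_add (u : ℕ → Bool) (c : Bool) (i n : ℕ) :
    countLetter u c (i + n) = countLetter u c i + (factorAt u i n).count c := by
  induction n with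
  | zero => simp [factorAt]
  | succ n ih =>
    rw [← Nat.add_assoc, countLetter_succ, ih, factorAt_succ, List.count_append,
      List.count_singleton]
    simp [Nat.add_assoc]

/-- A block with more than `m` letters `c` contains the letter `c` of rank `m` (from `0`). -/
lemma exists_rank (u : ℕ → Bool) (c : Bool) (i n m : ℕ)
    (h : m < (factorAt u i n).count c) :
    ∃ k < n, u (i + k) = c ∧ countLetter u c (i + k) = countLetter u c i + m := by
  induction n with
  | zero => simp [factorAt] at h
  | succ n ih =>
    by_cases hm : m < (factorAt u i n).count c
    · obtain ⟨k, hk, h1⟩ := ih hm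
      exact ⟨k, by omega, h1⟩
    · rw [factorAt_succ, List.count_append, List.count_singleton] at h
      by_cases hc : u (i + n) = c
      · refine ⟨n, by omega, hc, ?_⟩
        rw [countLetter_add]
        simp only [hc, beq_self_eq_true, if_true] at h
        omega
      · simp [hc] at h
        omega

/-! ### The colouring -/

lemma piMap_vdelta (δ i : ℕ) : piMap (vdelta δ i) = fibWord i := by
  unfold vdelta
  split_ifs with h
  · simp [piMap, h]
  · simp [piMap, h]

/-- The letter of the colouring depends only on the Fibonacci letter and its count. -/
lemma vdelta_eq_iff {δ i j : ℕ} {c : Bool} (hi : fibWord i = c) (hj : fibWord j = c) :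
    vdelta δ i = vdelta δ j ↔
      yseq δ (countLetter fibWord c i) = yseq δ (countLetter fibWord c j) := by
  cases c <;> simp [vdelta, hi, hj]

lemma map_piMap_factorAt (δ i n : ℕ) :
    (factorAt (vdelta δ) i n).map piMap = factorAt fibWord i n := by
  simp [factorAt, Function.comp_def, piMap_vdelta]

lemma OccursAt.map_piMap {δ i : ℕ} {w : List (ℕ ⊕ ℕ)} (h : OccursAt (vdelta δ) w i) :
    OccursAt fibWord (w.map piMap) i := by
  unfold OccursAt at *
  rw [List.length_map, ← map_piMap_factorAt δ, h]

/-- A factor with at least `2 ^ (δ - 1)` letters over `c` determines, modulo `2 ^ (δ - 1)`, the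
number of letters over `c` preceding any of its occurrences. -/
lemma countLetter_modEq {δ : ℕ} (hδ : 1 ≤ δ) {w : List (ℕ ⊕ ℕ)} {c : Bool}
    (hc : 2 ^ (δ - 1) ≤ (w.map piMap).count c) {i j : ℕ}
    (hi : OccursAt (vdelta δ) w i) (hj : OccursAt (vdelta δ) w j) :
    countLetter fibWord c i ≡ countLetter fibWord c j [MOD 2 ^ (δ - 1)] := by
  have hH : 0 < 2 ^ (δ - 1) := by positivity
  -- `m < 2 ^ (δ - 1)` is the rank in `w` of a letter over `c` which carries the colour `1`.
  obtain ⟨m, hm, hdvd⟩ : ∃ m < 2 ^ (δ - 1), 2 ^ (δ - 1) ∣ countLetter fibWord c i + m := by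
    have h1 := Nat.mod_lt (countLetter fibWord c i) hH
    have h2 := Nat.div_add_mod (countLetter fibWord c i) (2 ^ (δ - 1))
    generalize countLetter fibWord c i = A at *
    rcases Nat.eq_zero_or_pos (A % 2 ^ (δ - 1)) with h0 | h0
    · exact ⟨0, hH, Nat.dvd_of_mod_eq_zero h0⟩
    · exact ⟨2 ^ (δ - 1) - A % 2 ^ (δ - 1), by omega, A / 2 ^ (δ - 1) + 1,
        by rw [Nat.mul_add]; omega⟩
  have hfi : factorAt fibWord i w.length = w.map piMap := by
    simpa [OccursAt] using hi.map_piMap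
  have hfj : factorAt fibWord j w.length = w.map piMap := by
    simpa [OccursAt] using hj.map_piMap
  obtain ⟨k, hk, hfk, hck⟩ := exists_rank fibWord c i w.length m (by rw [hfi]; omega)
  have hv : vdelta δ (i + k) = vdelta δ (j + k) := hi.eq hj hk
  have hfk' : fibWord (j + k) = c := by
    rw [← hfk, ← piMap_vdelta δ, ← piMap_vdelta δ, hv]
  have hpre : factorAt fibWord i k = factorAt fibWord j k := by
    refine List.map_congr_left fun l hl => ?_
    have hl' : l < w.length := (List.mem_range.1 hl).trans hk
    rw [← piMap_vdelta δ, ← piMap_vdelta δ, hi.eq hj hl']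
  have hck' : countLetter fibWord c (j + k) = countLetter fibWord c j + m := by
    rw [countLetter_add] at hck ⊢
    rw [← hpre]
    omega
  rw [vdelta_eq_iff hfk hfk', hck, hck', (yseq_eq_one_iff hδ _).2 hdvd] at hv
  have hdvd' := (yseq_eq_one_iff hδ _).1 hv.symm
  exact Nat.ModEq.add_right_cancel' m
    (((Nat.modEq_zero_iff_dvd).2 hdvd).trans ((Nat.modEq_zero_iff_dvd).2 hdvd').symm)

/-- if w is a bispecial factor of v_δ whose discolouration contains at
least H = 2^(δ-1) letters a and at least H letters b, then π(w) is a bispecial factor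
of the Fibonacci word. -/
theorem bispecial_projects_to_bispecial (δ : ℕ) (hδ : 1 ≤ δ) (w : List (ℕ ⊕ ℕ))
    (ha : 2 ^ (δ - 1) ≤ (w.map piMap).count false)
    (hb : 2 ^ (δ - 1) ≤ (w.map piMap).count true)
    (hbis : IsBispecial (vdelta δ) w) :
    IsBispecial fibWord (w.map piMap) := by
  have hcount : ∀ c : Bool, 2 ^ (δ - 1) ≤ (w.map piMap).count c := by
    rintro (_ | _)
    exacts [ha, hb]
  obtain ⟨⟨p, hp⟩, ⟨x, y, hxy, ⟨i, hi⟩, ⟨j, hj⟩⟩, ⟨z, t, hzt, ⟨k, hk⟩, ⟨l, hl⟩⟩⟩ := hbis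
  refine ⟨⟨p, hp.map_piMap⟩, ⟨piMap x, piMap y, ?_, ⟨i, ?_⟩, ⟨j, ?_⟩⟩,
    ⟨piMap z, piMap t, ?_, ⟨k, hk.map_piMap⟩, ⟨l, hl.map_piMap⟩⟩⟩
  · intro h
    obtain ⟨hi', rfl⟩ := occursAt_append_singleton.1 hi
    obtain ⟨hj', rfl⟩ := occursAt_append_singleton.1 hj
    rw [piMap_vdelta, piMap_vdelta] at h
    refine hxy ((vdelta_eq_iff h rfl).2 (yseq_congr ?_))
    have hfi : factorAt fibWord i w.length = w.map piMap := by
      simpa [OccursAt] using hi'.map_piMap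
    have hfj : factorAt fibWord j w.length = w.map piMap := by
      simpa [OccursAt] using hj'.map_piMap
    rw [countLetter_add, countLetter_add _ _ j, hfi, hfj]
    exact (countLetter_modEq hδ (hcount _) hi' hj').add_right _
  · simpa using hi.map_piMap
  · simpa using hj.map_piMap
  · intro h
    obtain ⟨rfl, hk'⟩ := occursAt_cons.1 hk
    obtain ⟨rfl, hl'⟩ := occursAt_cons.1 hl
    rw [piMap_vdelta, piMap_vdelta] at h
    refine hzt ((vdelta_eq_iff h rfl).2 (yseq_congr ?_))
    have hm := countLetter_modEq hδ (hcount (fibWord l)) hk' hl'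
    rw [countLetter_succ, countLetter_succ, if_pos h, if_pos rfl] at hm
    exact hm.add_right_cancel' 1
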